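/- Unbiasedness of the two-point gradient estimator (Lemma 1, two-point case): Let f : ℝ^d → ℝ be Lipschitz continuous and bounded, and let δ > 0. Define the smoothed function f̌(x) := E_v[ f(x + δv) ], where v is uniformly distributed on the closed unit ball B = {v ∈ ℝ^d : ‖v‖ ≤ 1}. Then for every x ∈ ℝ^d, E_u[ (d/(2δ)) ( f(x + δu) − f(x − δu) ) u ] = ∇f̌(x), where u is uniformly distributed on the unit sphere S = {u ∈ ℝ^d : ‖u‖ = 1}. -/

import Mathlib

open MeasureTheory Metric

/-- The uniform (normalized Lebesgue) probability measure on the closed unit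
ball of `ℝ^d`. -/
noncomputable def ballUniform (d : ℕ) : Measure (EuclideanSpace ℝ (Fin d)) :=
  (volume (closedBall (0 : EuclideanSpace ℝ (Fin d)) 1))⁻¹ •
    volume.restrict (closedBall (0 : EuclideanSpace ℝ (Fin d)) 1)

/-- The uniform (normalized surface) probability measure on the unit sphere of
`ℝ^d`, viewed as a measure on `ℝ^d`. -/
noncomputable def sphereUniform (d : ℕ) : Measure (EuclideanSpace ℝ (Fin d)) :=
  Measure.map Subtype.val
    (((volume : Measure (EuclideanSpace ℝ (Fin d))).toSphere Set.univ)⁻¹ •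
      (volume : Measure (EuclideanSpace ℝ (Fin d))).toSphere)

/-
For continuous `g` and a direction `w`, the identity
`∫_B g (x + w + v) dv - ∫_B g (x + v) dv = ∫₀¹ ∫_S ⟪u, w⟫ g (x + t w + u) dσ(u) dt`
is a form of the divergence theorem on the unit ball. The indicator of the ball cannot be
differentiated, so one first replaces it by the Lipschitz kernel `(R² - ‖v‖²)₊`: translating the
kernel instead of `g` and using its gradient `-2 v` gives
`∫ (R² - ‖v‖²)₊ (g (x + w + v) - g (x + v)) dv = ∫₀¹ ∫_{‖v‖ ≤ R} 2 ⟪v, w⟫ g (x + t w + v) dv dt`.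
In polar coordinates both sides are differentiable in `R`, with derivatives at `R = 1` equal to
twice the two sides of the first identity. That identity expresses increments of the ball average
as line integrals of a continuous vector field, which is therefore its gradient. The two-point
formula is the mean of the resulting one-point formulas for `δ` and `-δ`, since the ball average is
even in `δ`.
-/

open Set Filter Topology Module
open scoped NNReal

section PolarCoordinates

variable {E F : Type*} [NormedAddCommGroup E] [NormedSpace ℝ E] [MeasurableSpace E]
  [BorelSpace E] [FiniteDimensional ℝ E] [Nontrivial E] (μ : Measure E) [μ.IsAddHaarMeasure]
  [NormedAddCommGroup F] [NormedSpace ℝ F] {φ : E → F}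

lemma integral_volumeIoiPow (n : ℕ) (ψ : ℝ → F) :
    ∫ r : Ioi (0 : ℝ), ψ r ∂Measure.volumeIoiPow n = ∫ r in Ioi (0 : ℝ), r ^ n • ψ r := by
  have hmeas : Measurable fun r : Ioi (0 : ℝ) => Real.toNNReal ((r : ℝ) ^ n) := by fun_prop
  simp only [Measure.volumeIoiPow, ENNReal.ofReal]
  rw [integral_withDensity_eq_integral_smul hmeas,
    integral_subtype_comap measurableSet_Ioi fun r => Real.toNNReal (r ^ n) • ψ r]
  refine setIntegral_congr_fun measurableSet_Ioi fun r hr => ?_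
  simp only [NNReal.smul_def, Real.coe_toNNReal _ (pow_nonneg (mem_Ioi.1 hr).le n)]

lemma integral_eq_integral_Ioi_integral_sphere (hφ : Integrable φ μ) :
    ∫ v, φ v ∂μ = ∫ r in Ioi (0 : ℝ), r ^ (finrank ℝ E - 1) •
      ∫ u : sphere (0 : E) 1, φ (r • (u : E)) ∂μ.toSphere := by
  have hpolar := μ.measurePreserving_homeomorphUnitSphereProd
  have hemb := (homeomorphUnitSphereProd E).measurableEmbedding
  set ψ : sphere (0 : E) 1 × Ioi (0 : ℝ) → F := fun p => φ ((p.2 : ℝ) • (p.1 : E))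
  have hψ (v : ({0}ᶜ : Set E)) : ψ (homeomorphUnitSphereProd E v) = φ v := by
    have hv : ‖(v : E)‖ ≠ 0 := norm_ne_zero_iff.2 v.2
    simp [ψ, smul_smul, hv]
  have hint : Integrable ψ (μ.toSphere.prod (.volumeIoiPow (finrank ℝ E - 1))) := by
    rw [← hpolar.integrable_comp_emb hemb]
    simp only [Function.comp_def, hψ]
    exact (integrableOn_iff_comap_subtypeVal (measurableSet_singleton 0).compl).1 hφ.integrableOn
  calc
    ∫ v, φ v ∂μ = ∫ v : ({0}ᶜ : Set E), φ v ∂(μ.comap (↑)) := by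
      rw [integral_subtype_comap (measurableSet_singleton _).compl φ, restrict_compl_singleton]
    _ = ∫ p, ψ p ∂μ.toSphere.prod (.volumeIoiPow (finrank ℝ E - 1)) := by
      simp only [← hpolar.integral_comp hemb, hψ]
    _ = ∫ r : Ioi (0 : ℝ), (∫ u : sphere (0 : E) 1, φ ((r : ℝ) • (u : E)) ∂μ.toSphere)
          ∂.volumeIoiPow (finrank ℝ E - 1) := integral_prod_symm _ hint
    _ = _ := integral_volumeIoiPow _ fun r => ∫ u : sphere (0 : E) 1, φ (r • (u : E)) ∂μ.toSphere

lemma setIntegral_closedBall_eq_intervalIntegral_sphere {R : ℝ} (hR : 0 ≤ R)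
    (hφ : IntegrableOn φ (closedBall 0 R) μ) :
    ∫ v in closedBall 0 R, φ v ∂μ = ∫ r in (0 : ℝ)..R, r ^ (finrank ℝ E - 1) •
      ∫ u : sphere (0 : E) 1, φ (r • (u : E)) ∂μ.toSphere := by
  rw [← integral_indicator measurableSet_closedBall, integral_eq_integral_Ioi_integral_sphere μ
    (hφ.integrable_indicator measurableSet_closedBall), intervalIntegral.integral_of_le hR,
    ← Ioi_inter_Iic, ← setIntegral_indicator measurableSet_Iic]
  refine setIntegral_congr_fun measurableSet_Ioi fun r hr => ?_
  have hmem (u : sphere (0 : E) 1) : r • (u : E) ∈ closedBall (0 : E) R ↔ r ≤ R := by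
    simp [norm_smul, abs_of_pos (mem_Ioi.1 hr)]
  by_cases h : r ≤ R <;> simp [indicator, hmem, h]

end PolarCoordinates

section SphereIntegrals

variable {E F : Type*} [NormedAddCommGroup E] [NormedSpace ℝ E] [MeasurableSpace E]
  [BorelSpace E] [FiniteDimensional ℝ E] (μ : Measure E) [μ.IsAddHaarMeasure]
  [NormedAddCommGroup F]

lemma integrable_toSphere {φ : E → F} (hφ : Continuous φ) :
    Integrable (fun u : sphere (0 : E) 1 => φ u) μ.toSphere :=
  (hφ.comp continuous_subtype_val).integrable_of_hasCompactSupport (.of_compactSpace _)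

lemma continuous_integral_sphere [NormedSpace ℝ F] {X : Type*} [TopologicalSpace X]
    [FirstCountableTopology X] [LocallyCompactSpace X] {φ : X → E → F} (hφ : Continuous φ.uncurry) :
    Continuous fun y => ∫ u : sphere (0 : E) 1, φ y u ∂μ.toSphere := by
  simpa only [Measure.restrict_univ] using
    continuous_parametric_integral_of_continuous (μ := μ.toSphere)
      (f := fun y (u : sphere (0 : E) 1) => φ y u) (by fun_prop) isCompact_univ

end SphereIntegrals

section ParaboloidCap

variable {E : Type*} [NormedAddCommGroup E]

/-- The positive part of `R ^ 2 - ‖v‖ ^ 2`: a Lipschitz kernel supported in the ball of radius `R`,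
whose gradient is `-2 v` inside that ball. -/
def paraboloidCap (R : ℝ) (v : E) : ℝ := max (R ^ 2 - ‖v‖ ^ 2) 0

lemma paraboloidCap_of_norm_le {R : ℝ} {v : E} (hv : ‖v‖ ≤ R) :
    paraboloidCap R v = R ^ 2 - ‖v‖ ^ 2 :=
  max_eq_left (by have := norm_nonneg v; nlinarith)

lemma paraboloidCap_of_le_norm {R : ℝ} {v : E} (hR : 0 ≤ R) (hv : R ≤ ‖v‖) :
    paraboloidCap R v = 0 :=
  max_eq_right (by nlinarith)

lemma paraboloidCap_eq_sq_sub_min_sq {R : ℝ} (hR : 0 ≤ R) (v : E) :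
    paraboloidCap R v = R ^ 2 - min ‖v‖ R ^ 2 := by
  rcases le_total ‖v‖ R with hv | hv
  · rw [paraboloidCap_of_norm_le hv, min_eq_left hv]
  · rw [paraboloidCap_of_le_norm hR hv, min_eq_right hv, sub_self]

lemma lipschitzWith_paraboloidCap {R : ℝ} (hR : 0 ≤ R) :
    LipschitzWith (2 * R.toNNReal) (paraboloidCap (E := E) R) := by
  refine LipschitzWith.of_dist_le_mul fun a b => ?_
  set p := min ‖a‖ R
  set q := min ‖b‖ R
  have hsum : |p + q| ≤ 2 * R := by
    rw [abs_of_nonneg (add_nonneg (le_min (norm_nonneg a) hR) (le_min (norm_nonneg b) hR))]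
    linarith [min_le_right ‖a‖ R, min_le_right ‖b‖ R]
  have hdiff : |q - p| ≤ ‖a - b‖ := by
    rw [abs_sub_comm]
    refine (abs_min_sub_min_le_max ‖a‖ R ‖b‖ R).trans ?_
    simpa using abs_norm_sub_norm_le a b
  calc dist (paraboloidCap R a) (paraboloidCap R b)
      = |(p + q) * (q - p)| := by
        rw [Real.dist_eq, paraboloidCap_eq_sq_sub_min_sq hR, paraboloidCap_eq_sq_sub_min_sq hR]
        congr 1
        ring
    _ ≤ (2 * R) * ‖a - b‖ := by
        rw [abs_mul]
        gcongr
    _ = ↑(2 * R.toNNReal) * dist a b := by simp [hR, dist_eq_norm]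

lemma support_paraboloidCap_subset {R : ℝ} (hR : 0 ≤ R) :
    Function.support (paraboloidCap (E := E) R) ⊆ closedBall 0 R := by
  intro v hv
  rw [mem_closedBall_zero_iff]
  by_contra! h
  exact hv (paraboloidCap_of_le_norm hR h.le)

lemma hasCompactSupport_paraboloidCap [ProperSpace E] {R : ℝ} (hR : 0 ≤ R) :
    HasCompactSupport (paraboloidCap (E := E) R) :=
  .of_support_subset_isCompact (isCompact_closedBall 0 R) (support_paraboloidCap_subset hR)

lemma integral_paraboloidCap_mul [MeasurableSpace E] [OpensMeasurableSpace E] (μ : Measure E)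
    {R : ℝ} (hR : 0 ≤ R) (h : E → ℝ) :
    ∫ v, paraboloidCap R v * h v ∂μ = ∫ v in closedBall 0 R, (R ^ 2 - ‖v‖ ^ 2) * h v ∂μ := by
  rw [← setIntegral_eq_integral_of_forall_compl_eq_zero (s := closedBall 0 R)]
  · refine setIntegral_congr_fun measurableSet_closedBall fun v hv => ?_
    simp only [paraboloidCap_of_norm_le (mem_closedBall_zero_iff.1 hv)]
  · intro v hv
    rw [Function.notMem_support.1 (notMem_subset (support_paraboloidCap_subset hR) hv), zero_mul]

variable [InnerProductSpace ℝ E]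

lemma lineDeriv_paraboloidCap_neg {R : ℝ} (hR : 0 ≤ R) {v : E} (hv : ‖v‖ ≠ R) (w : E) :
    lineDeriv ℝ (paraboloidCap R) v (-w) =
      (closedBall 0 R).indicator (fun v => 2 * inner ℝ v w) v := by
  have hcont : Tendsto (fun t : ℝ => ‖v + t • (-w)‖) (𝓝 0) (𝓝 ‖v‖) := by
    have : Continuous fun t : ℝ => ‖v + t • (-w)‖ := by fun_prop
    simpa using this.tendsto 0
  apply HasLineDerivAt.lineDeriv
  rcases hv.lt_or_gt with hin | hout
  · have hline : HasDerivAt (fun t : ℝ => v + t • (-w)) (-w) 0 := by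
      simpa using ((hasDerivAt_id (0 : ℝ)).smul_const (-w)).const_add v
    have hderiv := hline.norm_sq.const_sub (R ^ 2)
    rw [indicator_of_mem (mem_closedBall_zero_iff.2 hin.le)]
    simp only [zero_smul, add_zero, inner_neg_right, mul_neg, neg_neg] at hderiv
    refine hderiv.congr_of_eventuallyEq ?_
    filter_upwards [hcont.eventually_lt_const hin] with t ht
    exact paraboloidCap_of_norm_le ht.le
  · rw [indicator_of_notMem (by simpa using hout)]
    refine (hasDerivAt_const (0 : ℝ) (0 : ℝ)).congr_of_eventuallyEq ?_
    filter_upwards [hcont.eventually_const_lt hout] with t ht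
    exact paraboloidCap_of_le_norm hR ht.le

end ParaboloidCap

section TranslatedIntegrals

variable {E : Type*} [NormedAddCommGroup E] [NormedSpace ℝ E] [MeasurableSpace E]
  [BorelSpace E] {μ : Measure E} [μ.IsAddHaarMeasure] {k g : E → ℝ}

lemma integral_slope_mul_translate (hk : Continuous k) (hksupp : HasCompactSupport k)
    (hg : Continuous g) (x w : E) (t s : ℝ) :
    ∫ v, (s⁻¹ • (k (v + s • (-w)) - k v)) * g (x + t • w + v) ∂μ =
      s⁻¹ • (∫ v, k v * g (x + (t + s) • w + v) ∂μ - ∫ v, k v * g (x + t • w + v) ∂μ) := by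
  have hint (r : ℝ) : Integrable (fun v => k v * g (x + r • w + v)) μ :=
    (hk.mul (by fun_prop)).integrable_of_hasCompactSupport hksupp.mul_right
  have hshift (v : E) : k (v + s • (-w)) * g (x + t • w + v) =
      k (v - s • w) * g (x + (t + s) • w + (v - s • w)) := by
    congr 2 <;> module
  have hint_shift : Integrable (fun v => k (v + s • (-w)) * g (x + t • w + v)) μ := by
    simpa only [hshift] using (hint (t + s)).comp_sub_right (s • w)
  rw [← integral_sub_right_eq_self (fun v => k v * g (x + (t + s) • w + v)) (s • w)]
  simp only [← hshift]
  rw [← integral_sub hint_shift (hint t), ← integral_smul]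
  simp only [smul_eq_mul, mul_assoc, sub_mul]

lemma hasDerivWithinAt_integral_mul_translate [FiniteDimensional ℝ E] {C : ℝ≥0}
    (hk : LipschitzWith C k) (hksupp : HasCompactSupport k) (hg : Continuous g) (x w : E) (t : ℝ) :
    HasDerivWithinAt (fun s : ℝ => ∫ v, k v * g (x + s • w + v) ∂μ)
      (∫ v, lineDeriv ℝ k v (-w) * g (x + t • w + v) ∂μ) (Ioi t) t := by
  have hslope := hk.integral_inv_smul_sub_mul_tendsto_integral_lineDeriv_mul'
    (μ := μ) hksupp (g := fun v => g (x + t • w + v)) (by fun_prop) (-w)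
  simp only [integral_slope_mul_translate hk.continuous hksupp hg] at hslope
  have hsub : Tendsto (fun s : ℝ => s - t) (𝓝[>] t) (𝓝[>] 0) := by
    have : ContinuousWithinAt (fun s : ℝ => s - t) (Ioi t) t := by fun_prop
    simpa only [sub_self] using this.tendsto_nhdsWithin (t := Ioi 0) fun s hs => sub_pos.2 hs
  rw [hasDerivWithinAt_iff_tendsto_slope' self_notMem_Ioi]
  refine (hslope.comp hsub).congr fun s => ?_
  simp only [Function.comp_apply, add_sub_cancel, slope, vsub_eq_sub]

end TranslatedIntegrals

section GradientOfPrimitive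

variable {E : Type*} [NormedAddCommGroup E] [InnerProductSpace ℝ E] [CompleteSpace E]

lemma hasGradientAt_of_sub_eq_integral {f : E → ℝ} {G : E → E} (hG : Continuous G) {x : E}
    (h : ∀ w, f (x + w) - f x = ∫ t in (0 : ℝ)..1, inner ℝ (G (x + t • w)) w) :
    HasGradientAt f (G x) x := by
  have hω : Continuous fun y => InnerProductSpace.toDual ℝ E (G y) := by fun_prop
  have hseg (y : E) :
      f y = f x + ∫ᶜ z in .segment x y, InnerProductSpace.toDual ℝ E (G z) := by
    rw [curveIntegral_segment, ← sub_eq_iff_eq_add']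
    simpa [AffineMap.lineMap_apply, add_comm] using h (y - x)
  exact ((HasFDerivAt.curveIntegral_segment_source hω).const_add (f x)).congr_of_eventuallyEq
    (.of_forall hseg)

end GradientOfPrimitive

section BallIntegrals

variable {E : Type*} [NormedAddCommGroup E] [InnerProductSpace ℝ E] [MeasurableSpace E]
  [BorelSpace E] [FiniteDimensional ℝ E] [Nontrivial E] (μ : Measure E) [μ.IsAddHaarMeasure]
  {g : E → ℝ}

lemma integral_lineDeriv_paraboloidCap_neg_mul {R : ℝ} (hR : 0 ≤ R) (w : E) (h : E → ℝ) :
    ∫ v, lineDeriv ℝ (paraboloidCap R) v (-w) * h v ∂μ =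
      ∫ v in closedBall 0 R, 2 * inner ℝ v w * h v ∂μ := by
  have hnorm : ∀ᵐ v ∂μ, ‖v‖ ≠ R := by
    filter_upwards [measure_eq_zero_iff_ae_notMem.1 (Measure.addHaar_sphere μ (0 : E) R)] with v hv
    simpa using hv
  rw [← integral_indicator measurableSet_closedBall]
  refine integral_congr_ae ?_
  filter_upwards [hnorm] with v hv
  rw [lineDeriv_paraboloidCap_neg hR hv]
  exact (indicator_mul_left _ _ h).symm

lemma integral_sq_sub_norm_sq_mul_translate_sub (hg : Continuous g) {R : ℝ} (hR : 0 ≤ R)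
    (x w : E) :
    ∫ v in closedBall 0 R, (R ^ 2 - ‖v‖ ^ 2) * g (x + w + v) ∂μ -
        ∫ v in closedBall 0 R, (R ^ 2 - ‖v‖ ^ 2) * g (x + v) ∂μ =
      ∫ t in (0 : ℝ)..1, ∫ v in closedBall 0 R, 2 * inner ℝ v w * g (x + t • w + v) ∂μ := by
  have hcont : Continuous fun t : ℝ =>
      ∫ v in closedBall 0 R, (R ^ 2 - ‖v‖ ^ 2) * g (x + t • w + v) ∂μ :=
    continuous_parametric_integral_of_continuous (by fun_prop) (isCompact_closedBall 0 R)
  have hcont_deriv : Continuous fun t : ℝ =>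
      ∫ v in closedBall 0 R, 2 * inner ℝ v w * g (x + t • w + v) ∂μ :=
    continuous_parametric_integral_of_continuous (by fun_prop) (isCompact_closedBall 0 R)
  have hderiv (t : ℝ) : HasDerivWithinAt
      (fun s : ℝ => ∫ v in closedBall 0 R, (R ^ 2 - ‖v‖ ^ 2) * g (x + s • w + v) ∂μ)
      (∫ v in closedBall 0 R, 2 * inner ℝ v w * g (x + t • w + v) ∂μ) (Ioi t) t := by
    simpa only [integral_paraboloidCap_mul μ hR, integral_lineDeriv_paraboloidCap_neg_mul μ hR]
      using hasDerivWithinAt_integral_mul_translate (μ := μ) (lipschitzWith_paraboloidCap hR)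
        (hasCompactSupport_paraboloidCap hR) hg x w t
  rw [intervalIntegral.integral_eq_sub_of_hasDeriv_right hcont.continuousOn
    (fun t _ => hderiv t) (hcont_deriv.intervalIntegrable 0 1)]
  simp only [one_smul, zero_smul, add_zero]

lemma hasDerivAt_integral_closedBall_sq_sub_norm_sq_mul (hg : Continuous g) {R : ℝ} (hR : 0 < R) :
    HasDerivAt (fun r => ∫ v in closedBall 0 r, (r ^ 2 - ‖v‖ ^ 2) * g v ∂μ)
      (2 * R * ∫ v in closedBall 0 R, g v ∂μ) R := by
  set p : ℝ → ℝ := fun r =>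
    r ^ (finrank ℝ E - 1) * ∫ u : sphere (0 : E) 1, g (r • (u : E)) ∂μ.toSphere
  have hsphere := continuous_integral_sphere μ (φ := fun (r : ℝ) u => g (r • u)) (by fun_prop)
  have hp : Continuous p := (continuous_pow _).mul hsphere
  have hq : Continuous fun r => r ^ 2 * p r := by fun_prop
  have hball {r : ℝ} (hr : 0 ≤ r) : ∫ v in closedBall 0 r, g v ∂μ = ∫ s in (0 : ℝ)..r, p s :=
    setIntegral_closedBall_eq_intervalIntegral_sphere μ hr
      (hg.continuousOn.integrableOn_compact (isCompact_closedBall 0 r))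
  have hcap {r : ℝ} (hr : 0 ≤ r) : ∫ v in closedBall 0 r, (r ^ 2 - ‖v‖ ^ 2) * g v ∂μ =
      r ^ 2 * (∫ s in (0 : ℝ)..r, p s) - ∫ s in (0 : ℝ)..r, s ^ 2 * p s := by
    rw [setIntegral_closedBall_eq_intervalIntegral_sphere μ hr
      (Continuous.continuousOn (by fun_prop) |>.integrableOn_compact (isCompact_closedBall 0 r)),
      ← intervalIntegral.integral_const_mul, ← intervalIntegral.integral_sub
        ((hp.const_mul _).intervalIntegrable _ _) (hq.intervalIntegrable _ _)]
    refine intervalIntegral.integral_congr fun s _ => ?_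
    simp only [norm_smul, norm_eq_of_mem_sphere, mul_one, Real.norm_eq_abs, sq_abs,
      integral_const_mul, smul_eq_mul, p]
    ring
  have hderiv := ((hasDerivAt_pow 2 R).mul (hp.integral_hasStrictDerivAt 0 R).hasDerivAt).sub
    (hq.integral_hasStrictDerivAt 0 R).hasDerivAt
  rw [hball hR.le]
  convert! hderiv.congr_of_eventuallyEq ?_ using 1
  · simp
  · filter_upwards [lt_mem_nhds hR] with r hr
    exact hcap hr.le

lemma integral_unitBall_translate_sub (hg : Continuous g) (x w : E) :
    ∫ v in closedBall 0 1, g (x + w + v) ∂μ - ∫ v in closedBall 0 1, g (x + v) ∂μ =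
      ∫ t in (0 : ℝ)..1,
        ∫ u : sphere (0 : E) 1, inner ℝ (u : E) w * g (x + t • w + u) ∂μ.toSphere := by
  set q : ℝ → ℝ → ℝ := fun t r => r ^ (finrank ℝ E - 1) *
    ∫ u : sphere (0 : E) 1, 2 * inner ℝ (r • (u : E)) w * g (x + t • w + r • (u : E)) ∂μ.toSphere
  have hsphere := continuous_integral_sphere μ
    (φ := fun (p : ℝ × ℝ) u => 2 * inner ℝ (p.2 • u) w * g (x + p.1 • w + p.2 • u)) (by fun_prop)
  have hq : Continuous q.uncurry := (continuous_snd.pow _).mul hsphere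
  have hswap {R : ℝ} (hR : 0 ≤ R) :
      ∫ v in closedBall 0 R, (R ^ 2 - ‖v‖ ^ 2) * g (x + w + v) ∂μ -
        ∫ v in closedBall 0 R, (R ^ 2 - ‖v‖ ^ 2) * g (x + v) ∂μ =
      ∫ r in (0 : ℝ)..R, ∫ t in (0 : ℝ)..1, q t r := by
    rw [integral_sq_sub_norm_sq_mul_translate_sub μ hg hR, ← intervalIntegral_intervalIntegral_swap]
    · refine intervalIntegral.integral_congr fun t _ => ?_
      exact setIntegral_closedBall_eq_intervalIntegral_sphere μ hR
        (Continuous.continuousOn (by fun_prop) |>.integrableOn_compact (isCompact_closedBall 0 R))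
    · exact (hq.continuousOn.integrableOn_compact (isCompact_uIcc.prod isCompact_uIcc)).mono_set
        (prod_mono uIoc_subset_uIcc uIoc_subset_uIcc)
  have hleft := (hasDerivAt_integral_closedBall_sq_sub_norm_sq_mul μ
    (g := fun v => g (x + w + v)) (by fun_prop) one_pos).sub
    (hasDerivAt_integral_closedBall_sq_sub_norm_sq_mul μ
      (g := fun v => g (x + v)) (by fun_prop) one_pos)
  have hright : HasDerivAt (fun R => ∫ r in (0 : ℝ)..R, ∫ t in (0 : ℝ)..1, q t r)
      (∫ t in (0 : ℝ)..1, q t 1) 1 :=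
    (Continuous.integral_hasStrictDerivAt (by fun_prop) 0 1).hasDerivAt
  have heq := hleft.unique <| hright.congr_of_eventuallyEq <| by
    filter_upwards [lt_mem_nhds one_pos] with R hR using hswap hR.le
  have hone (t : ℝ) : q t 1 =
      2 * ∫ u : sphere (0 : E) 1, inner ℝ (u : E) w * g (x + t • w + u) ∂μ.toSphere := by
    simp only [q, one_pow, one_smul, one_mul, mul_assoc, integral_const_mul]
  simp only [hone, intervalIntegral.integral_const_mul] at heq
  linarith

lemma hasGradientAt_integral_unitBall (hg : Continuous g) (x : E) :
    HasGradientAt (fun y => ∫ v in closedBall 0 1, g (y + v) ∂μ)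
      (∫ u : sphere (0 : E) 1, g (x + u) • (u : E) ∂μ.toSphere) x := by
  have hG : Continuous fun y => ∫ u : sphere (0 : E) 1, g (y + u) • (u : E) ∂μ.toSphere :=
    continuous_integral_sphere μ (φ := fun y u => g (y + u) • u) (by fun_prop)
  refine hasGradientAt_of_sub_eq_integral hG fun w => ?_
  rw [integral_unitBall_translate_sub μ hg]
  refine intervalIntegral.integral_congr fun t _ => ?_
  have hint := integrable_toSphere μ (φ := fun u => g (x + t • w + u) • u) (by fun_prop)
  rw [real_inner_comm, ← integral_inner hint]
  simp only [real_inner_smul_right, real_inner_comm, mul_comm]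

lemma hasGradientAt_integral_unitBall_smul (hg : Continuous g) {δ : ℝ} (hδ : δ ≠ 0) (x : E) :
    HasGradientAt (fun y => ∫ v in closedBall 0 1, g (y + δ • v) ∂μ)
      (δ⁻¹ • ∫ u : sphere (0 : E) 1, g (x + δ • (u : E)) • (u : E) ∂μ.toSphere) x := by
  have hscaled := hasGradientAt_integral_unitBall μ (g := fun z => g (δ • z)) (by fun_prop)
    (δ⁻¹ • x)
  have hcomp := hscaled.hasFDerivAt.comp x ((hasFDerivAt_id x).const_smul δ⁻¹)
  simp only [smul_add, smul_inv_smul₀ hδ] at hcomp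
  rw [hasGradientAt_iff_hasFDerivAt]
  convert! hcomp using 1
  · ext y
    simp [smul_inv_smul₀ hδ]
  · ext w
    simp

end BallIntegrals

section UniformMeasures

variable {d : ℕ} {F : Type*} [NormedAddCommGroup F]

lemma integrable_sphereUniform [NeZero d] {φ : EuclideanSpace ℝ (Fin d) → F}
    (hφ : Continuous φ) : Integrable φ (sphereUniform d) := by
  have hmass : (volume : Measure (EuclideanSpace ℝ (Fin d))).toSphere univ ≠ 0 :=
    Measure.measure_univ_ne_zero.2 (Measure.toSphere_ne_zero _)
  exact (MeasurableEmbedding.subtype_coe isClosed_sphere.measurableSet).integrable_map_iff.2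
    ((integrable_toSphere volume hφ).smul_measure (ENNReal.inv_ne_top.2 hmass))

variable [NormedSpace ℝ F]

lemma integral_ballUniform (φ : EuclideanSpace ℝ (Fin d) → F) :
    ∫ v, φ v ∂ballUniform d =
      (volume.real (closedBall (0 : EuclideanSpace ℝ (Fin d)) 1))⁻¹ •
        ∫ v in closedBall 0 1, φ v := by
  rw [ballUniform, integral_smul_measure, ENNReal.toReal_inv, measureReal_def]

lemma integral_ballUniform_neg (φ : EuclideanSpace ℝ (Fin d) → F) :
    ∫ v, φ (-v) ∂ballUniform d = ∫ v, φ v ∂ballUniform d := by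
  have hneg := (Measure.measurePreserving_neg volume).setIntegral_preimage_emb
    (MeasurableEquiv.neg _).measurableEmbedding φ (closedBall 0 1)
  rw [integral_ballUniform, integral_ballUniform]
  simpa using congrArg _ hneg

lemma integral_sphereUniform (φ : EuclideanSpace ℝ (Fin d) → F) :
    ∫ u, φ u ∂sphereUniform d =
      (d * volume.real (closedBall (0 : EuclideanSpace ℝ (Fin d)) 1))⁻¹ •
        ∫ u : sphere (0 : EuclideanSpace ℝ (Fin d)) 1, φ u ∂volume.toSphere := by
  have hmass : ((volume : Measure (EuclideanSpace ℝ (Fin d))).toSphere univ).toReal =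
      d * volume.real (closedBall (0 : EuclideanSpace ℝ (Fin d)) 1) := by
    simp [measureReal_def, Measure.addHaar_unitClosedBall_eq_addHaar_unitBall]
  rw [sphereUniform, (MeasurableEmbedding.subtype_coe isClosed_sphere.measurableSet).integral_map,
    integral_smul_measure, ENNReal.toReal_inv, hmass]

variable {f : EuclideanSpace ℝ (Fin d) → ℝ}

lemma hasGradientAt_integral_ballUniform [NeZero d] (hf : Continuous f) {δ : ℝ} (hδ : δ ≠ 0)
    (x : EuclideanSpace ℝ (Fin d)) :
    HasGradientAt (fun y => ∫ v, f (y + δ • v) ∂ballUniform d)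
      ((d / δ) • ∫ u, f (x + δ • u) • u ∂sphereUniform d) x := by
  have hd : (d : ℝ) ≠ 0 := NeZero.ne _
  have hgrad := (hasGradientAt_integral_unitBall_smul volume hf hδ x).hasFDerivAt.const_smul
    (volume.real (closedBall (0 : EuclideanSpace ℝ (Fin d)) 1))⁻¹
  simp only [integral_ballUniform, integral_sphereUniform]
  rw [hasGradientAt_iff_hasFDerivAt]
  convert! hgrad using 1
  rw [← map_smul, smul_smul, smul_smul]
  congr 2
  field_simp

theorem two_point_gradient_estimator_unbiased_general (hd : 0 < d) (hf : Continuous f) {δ : ℝ}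
    (hδ : δ ≠ 0) (x : EuclideanSpace ℝ (Fin d)) :
    HasGradientAt (fun y => ∫ v, f (y + δ • v) ∂ballUniform d)
      (∫ u, ((d : ℝ) / (2 * δ) * (f (x + δ • u) - f (x - δ • u))) • u ∂sphereUniform d) x := by
  have : NeZero d := ⟨hd.ne'⟩
  set G : ℝ → EuclideanSpace ℝ (Fin d) :=
    fun ε => (d / ε) • ∫ u, f (x + ε • u) • u ∂sphereUniform d with hG
  have hpos : HasGradientAt (fun y => ∫ v, f (y + δ • v) ∂ballUniform d) (G δ) x :=
    hasGradientAt_integral_ballUniform hf hδ x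
  have hneg : HasGradientAt (fun y => ∫ v, f (y + δ • v) ∂ballUniform d) (G (-δ)) x := by
    have heven (y) : ∫ v, f (y + δ • v) ∂ballUniform d = ∫ v, f (y + -δ • v) ∂ballUniform d := by
      simpa using (integral_ballUniform_neg fun v => f (y + δ • v)).symm
    simpa only [heven] using hasGradientAt_integral_ballUniform hf (neg_ne_zero.2 hδ) x
  have hint (ε : ℝ) : Integrable (fun u => (d / ε) • f (x + ε • u) • u) (sphereUniform d) :=
    integrable_sphereUniform (by fun_prop)
  have hmean : ∫ u, ((d : ℝ) / (2 * δ) * (f (x + δ • u) - f (x - δ • u))) • u ∂sphereUniform d =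
      (2⁻¹ : ℝ) • (G δ + G (-δ)) := by
    simp only [hG, ← integral_smul]
    rw [← integral_add (hint δ) (hint (-δ)), ← integral_smul]
    congr! 2 with u
    rw [neg_smul, ← sub_eq_add_neg]
    module
  rwa [hmean, ← hpos.unique hneg, ← two_smul ℝ, inv_smul_smul₀ two_ne_zero]

end UniformMeasures

/-- Unbiasedness of the two-point gradient estimator (Lemma 1, two-point case):
for Lipschitz and bounded `f` and `δ > 0`, with `f̌(x) = E_v[f(x + δv)]`
(`v` uniform on the unit ball),
`E_u[(d/(2δ))(f(x + δu) − f(x − δu)) u] = ∇f̌(x)` (`u` uniform on the unit sphere). -/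
theorem two_point_gradient_estimator_unbiased
    (d : ℕ) (hd : 0 < d)
    (f : EuclideanSpace ℝ (Fin d) → ℝ)
    (L : ℝ) (hlip : ∀ x y, |f x - f y| ≤ L * ‖x - y‖)
    (F : ℝ) (hbdd : ∀ x, |f x| ≤ F)
    (δ : ℝ) (hδ : 0 < δ) :
    ∀ x, ∫ u, ((d : ℝ) / (2 * δ) * (f (x + δ • u) - f (x - δ • u))) • u
          ∂(sphereUniform d) =
        gradient (fun y => ∫ v, f (y + δ • v) ∂(ballUniform d)) x :=
  fun x => (two_point_gradient_estimator_unbiased_general hd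
    (LipschitzWith.of_dist_le' fun a b => by simpa [dist_eq_norm] using hlip a b).continuous
    hδ.ne' x).gradient.symm
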